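/- Let n ≥ 2 and let c₁, c₂ ∈ ℝ. Consider the two curve-germs in ℝ^{2n} (coordinates (p₁,q₁,p₂,q₂,…,pₙ,qₙ), all unlisted coordinates equal to 0): B₁(t) = (t³, −t², 0, −c₁t², 0, …, 0) and B₂(t) = (t³, 0, −t², c₂t⁵, 0, …, 0) (the class (T₇)¹). Then: Lt(B₁) = 3; Lt(B₂) = 5 if c₂ ≠ 0 and Lt(B₂) = ∞ if c₂ = 0; and Lt(B₁,B₂) = 2 if c₁ ≠ 0 while Lt(B₁,B₂) = 3 if c₁ = 0. -/

import Mathlib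

noncomputable section

/-- The order of vanishing at `0` of a function `h : ℝ → ℝ`: the least `k ≥ 1` such that
the `k`-th derivative of `h` at `0` is nonzero, and `∞` if all derivatives vanish at `0`. -/
def vanishOrder (h : ℝ → ℝ) : ℕ∞ :=
  sInf {k : ℕ∞ | ∃ m : ℕ, k = m ∧ 1 ≤ m ∧ iteratedDeriv m h 0 ≠ 0}

/-- The standard symplectic form `ω = ∑ dpᵢ ∧ dqᵢ` on `ℝ^{2n}`, where the coordinates are
ordered as `(p₁, q₁, …, pₙ, qₙ)` (so `pᵢ` has index `2(i-1)` and `qᵢ` has index `2(i-1)+1`). -/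
def stdSymp (n : ℕ) (u v : Fin (2 * n) → ℝ) : ℝ :=
  ∑ i : Fin n,
    (u ⟨2 * i.val, by have := i.isLt; omega⟩ * v ⟨2 * i.val + 1, by have := i.isLt; omega⟩ -
     u ⟨2 * i.val + 1, by have := i.isLt; omega⟩ * v ⟨2 * i.val, by have := i.isLt; omega⟩)

/-- A germ at `0` of a smooth Lagrangian submanifold of `(ℝ^{2n}, ω)`, given by `n` smooth
functions `H₁, …, Hₙ` vanishing at `0`, whose differentials are linearly independent at the
points of `{H₁ = ⋯ = Hₙ = 0}` near `0`, and such that `ω` vanishes on `ker DH(x)` at every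
such point. -/
structure LagrangianGerm (n : ℕ) : Type where
  H : Fin n → (Fin (2 * n) → ℝ) → ℝ
  smooth : ∀ i, ContDiff ℝ (⊤ : ℕ∞) (H i)
  zero_at_zero : ∀ i, H i 0 = 0
  lagrangian : ∃ U : Set (Fin (2 * n) → ℝ), IsOpen U ∧ 0 ∈ U ∧
    ∀ x ∈ U, (∀ i, H i x = 0) →
      LinearIndependent ℝ (fun i => fderiv ℝ (H i) x) ∧
      ∀ u v : Fin (2 * n) → ℝ, (∀ i, fderiv ℝ (H i) x u = 0) →
        (∀ i, fderiv ℝ (H i) x v = 0) → stdSymp n u v = 0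

/-- The tangency order `t(f, L)` of a curve `f` to a Lagrangian submanifold-germ `L`:
the minimum over `i` of the order of vanishing at `0` of `Hᵢ ∘ f`. -/
def tOrd {n : ℕ} (f : ℝ → Fin (2 * n) → ℝ) (L : LagrangianGerm n) : ℕ∞ :=
  ⨅ i : Fin n, vanishOrder (fun t => L.H i (f t))

/-- The Lagrangian tangency order `Lt(f)` of a curve `f`. -/
def Lt1 {n : ℕ} (f : ℝ → Fin (2 * n) → ℝ) : ℕ∞ :=
  ⨆ L : LagrangianGerm n, tOrd f L

/-- The Lagrangian tangency order `Lt(f, g)` of a multi-germ of two curves. -/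
def Lt2 {n : ℕ} (f g : ℝ → Fin (2 * n) → ℝ) : ℕ∞ :=
  ⨆ L : LagrangianGerm n, min (tOrd f L) (tOrd g L)

/-- The Lagrangian tangency order `Lt(f, g, h)` of a multi-germ of three curves. -/
def Lt3 {n : ℕ} (f g h : ℝ → Fin (2 * n) → ℝ) : ℕ∞ :=
  ⨆ L : LagrangianGerm n, min (tOrd f L) (min (tOrd g L) (tOrd h L))

/-!
Bundle the equations of a Lagrangian germ into `H : ℝ²ⁿ → ℝⁿ`. For a curve `t²v + t³w + t⁵u`, the
tangency order exceeds `k ≤ 5` exactly when the Taylor coefficients of `H` along the curve vanish up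
to order `k`; these are `DH v`, `DH w`, `½ D²H(v, v)` and `DH u + D²H(v, w)` in orders 2 to 5.

The kernel of `DH` at `0` is isotropic, so `ω(w, v) ≠ 0` bounds the order of one curve by 3, and
two curves with `ω(v₂, v₁) ≠ 0` have joint order at most 2. For the bound 5, differentiate the
isotropy of the tangent spaces along the germ: this gives a bilinear `B` with
`DH (B(x, y)) = -D²H(x, y)` and `ω(B(x, v), w) + ω(v, B(x, w)) = 0` on `ker DH`. If all
coefficients up to order 5 vanish, then `B(v, v)` and `u - B(v, w)` lie in `ker DH`, whence
`ω(v, u) = ω(v, B(v, w)) = -ω(B(v, v), w) = 0`. Lagrangian coordinate subspaces attain all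
the bounds.
-/

open Filter Topology Asymptotics
open scoped Nat

theorem linearIndependent_iff_surjective_pi {K V ι : Type*} [Field K] [AddCommGroup V] [Module K V]
    [Finite ι] {A : ι → V →ₗ[K] K} :
    LinearIndependent K A ↔ Function.Surjective (LinearMap.pi A) := by
  classical
  have := Fintype.ofFinite ι
  have hcomb : Fintype.linearCombination K A =
      (LinearMap.pi A).dualMap ∘ₗ (dotProductEquiv K ι).toLinearMap := by
    ext c x
    simp [dotProductEquiv]
  rw [linearIndependent_iff_injective_fintypeLinearCombination, ← LinearMap.dualMap_injective_iff,
    hcomb, LinearMap.coe_comp]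
  exact (dotProductEquiv K ι).injective_comp _

section Asymptotics

variable {E F : Type*} [NormedAddCommGroup E] [NormedSpace ℝ E] [NormedAddCommGroup F]
  [NormedSpace ℝ F]

theorem isLittleO_pow_smul_of_lt {k m : ℕ} (hkm : k < m) (c : F) :
    (fun t : ℝ ↦ t ^ m • c) =o[𝓝 0] fun t ↦ t ^ k := by
  simpa using (isLittleO_pow_pow hkm).smul_isBigO
    (isBigO_const_const c (one_ne_zero' ℝ) (𝓝 (0 : ℝ)))

theorem eq_zero_of_pow_smul_isLittleO_pow {m : ℕ} {c : F}
    (h : (fun t : ℝ ↦ t ^ m • c) =o[𝓝 0] fun t ↦ t ^ m) : c = 0 := by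
  by_contra hc
  have hpow : (fun t : ℝ ↦ t ^ m) =O[𝓝 0] fun t ↦ t ^ m • c := by
    simpa using (isBigO_refl (fun t : ℝ ↦ t ^ m) (𝓝 0)).smul
      (isBigO_const_const (1 : ℝ) hc (𝓝 0))
  have hne : ∀ᶠ t : ℝ in 𝓝[≠] 0, t ^ m ≠ 0 := by
    filter_upwards [self_mem_nhdsWithin] with t ht using pow_ne_zero m ht
  exact isLittleO_irrefl hne.frequently ((hpow.trans_isLittleO h).mono nhdsWithin_le_nhds)

theorem isLittleO_sum_pow_smul_iff {s : Finset ℕ} {c : ℕ → F} {k : ℕ} :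
    (fun t : ℝ ↦ ∑ m ∈ s, t ^ m • c m) =o[𝓝 0] (fun t ↦ t ^ k) ↔ ∀ m ∈ s, m ≤ k → c m = 0 := by
  refine ⟨fun h m ↦ ?_, fun h ↦ .fun_sum fun m hm ↦ ?_⟩
  · induction m using Nat.strong_induction_on with | _ m ih
    intro hms hmk
    have hrest : (fun t : ℝ ↦ ∑ j ∈ s.erase m, t ^ j • c j) =o[𝓝 0] fun t ↦ t ^ m := by
      refine .fun_sum fun j hj ↦ ?_
      obtain ⟨hjm, hjs⟩ := Finset.mem_erase.1 hj
      rcases hjm.lt_or_gt with hjm | hjm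
      · simp [ih j hjm hjs (hjm.le.trans hmk)]
      · exact isLittleO_pow_smul_of_lt hjm (c j)
    have hsum : (fun t : ℝ ↦ ∑ j ∈ s, t ^ j • c j) =o[𝓝 0] fun t ↦ t ^ m := by
      rcases hmk.eq_or_lt with rfl | hmk
      exacts [h, h.trans (isLittleO_pow_pow hmk)]
    refine eq_zero_of_pow_smul_isLittleO_pow ((hsum.sub hrest).congr_left fun t ↦ ?_)
    rw [← Finset.add_sum_erase s _ hms, add_sub_cancel_right]
  · rcases le_or_gt m k with hmk | hmk
    · simp [h m hm hmk]
    · exact isLittleO_pow_smul_of_lt hmk (c m)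

theorem isLittleO_pow_iff_of_sub_sum_isLittleO {f : ℝ → F} {s : Finset ℕ} {c : ℕ → F} {k : ℕ}
    (hf : (fun t ↦ f t - ∑ m ∈ s, t ^ m • c m) =o[𝓝 0] fun t ↦ t ^ k) :
    f =o[𝓝 0] (fun t ↦ t ^ k) ↔ ∀ m ∈ s, m ≤ k → c m = 0 := by
  rw [← isLittleO_sum_pow_smul_iff]
  exact ⟨fun h ↦ (h.sub hf).congr_left fun t ↦ sub_sub_cancel _ _,
    fun h ↦ (hf.add h).congr_left fun t ↦ sub_add_cancel _ _⟩

theorem isBigO_sub_taylor_of_contDiffAt [CompleteSpace F] {f : E → F} {a : E} {n : ℕ}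
    (hf : ContDiffAt ℝ (n + 1) f a) :
    (fun y ↦ f (a + y) -
      ∑ k ∈ Finset.range (n + 1), (k ! : ℝ)⁻¹ • iteratedFDeriv ℝ k f a fun _ ↦ y)
      =O[𝓝 0] fun y ↦ ‖y‖ ^ (n + 1) := by
  obtain ⟨C, hC⟩ := (hf.continuousAt_iteratedFDeriv (k := n + 1) (by simp)).norm.isBoundedUnder_le
  rw [eventually_map] at hC
  have hnhds := hC.and (hf.eventually (by simp))
  obtain ⟨ε, hε, hball⟩ := Metric.eventually_nhds_iff_ball.1 hnhds
  refine IsBigO.of_bound ((n ! : ℝ)⁻¹ * C) ?_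
  filter_upwards [Metric.ball_mem_nhds 0 hε] with y hy
  have hseg (t : ℝ) (ht : t ∈ Set.Icc 0 1) : a + t • y ∈ Metric.ball a ε := by
    simp only [mem_ball_zero_iff] at hy
    rw [mem_ball_iff_norm, add_sub_cancel_left, norm_smul, Real.norm_of_nonneg ht.1]
    exact (mul_le_of_le_one_left (norm_nonneg y) ht.2).trans_lt hy
  have hint : ‖∫ t in (0 : ℝ)..1, (1 - t) ^ n •
      iteratedFDeriv ℝ (n + 1) f (a + t • y) fun _ ↦ y‖ ≤ C * ‖y‖ ^ (n + 1) * |1 - 0| := by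
    refine intervalIntegral.norm_integral_le_of_norm_le_const fun t ht ↦ ?_
    rw [Set.uIoc_of_le zero_le_one] at ht
    have hD : ‖iteratedFDeriv ℝ (n + 1) f (a + t • y) fun _ ↦ y‖ ≤ C * ‖y‖ ^ (n + 1) :=
      (ContinuousMultilinearMap.le_of_opNorm_le (hball _ (hseg t ⟨ht.1.le, ht.2⟩)).1 _).trans_eq
        (by simp)
    rw [norm_smul, norm_pow, Real.norm_of_nonneg (sub_nonneg.2 ht.2)]
    exact (mul_le_of_le_one_left (norm_nonneg _)
      (pow_le_one₀ (sub_nonneg.2 ht.2) (by linarith [ht.1]))).trans hD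
  rw [map_add_eq_sum_add_integral_iteratedFDeriv fun t ht ↦ (hball _ (hseg t ht)).2,
    add_sub_cancel_left, norm_smul, norm_pow, norm_norm, norm_inv, Real.norm_natCast, mul_assoc]
  gcongr
  simpa using hint

end Asymptotics

section Straightening

variable {E F G : Type*} [NormedAddCommGroup E] [NormedSpace ℝ E] [NormedAddCommGroup F]
  [NormedSpace ℝ F] [NormedAddCommGroup G] [NormedSpace ℝ G]

/-- `ψ` is a `C²` change of coordinates near `a`, tangent to the translation `y ↦ a + y` at `0`,
in which `H` becomes affine. It carries `ker DH(a)` to the level set of `H` through `a`. -/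
structure IsStraightening (H : E → F) (a : E) (ψ : E → E) : Prop where
  map_zero : ψ 0 = a
  contDiffAt : ContDiffAt ℝ 2 ψ 0
  fderiv_zero : fderiv ℝ ψ 0 = .id ℝ E
  eventually_comp_eq : ∀ᶠ y in 𝓝 0, H (ψ y) = H a + fderiv ℝ H a y

-- Invert `x ↦ (x - a) + R (H x - H a - DH(a) (x - a))`, where `R` is a right inverse of `DH(a)`.
theorem exists_isStraightening [CompleteSpace E] [FiniteDimensional ℝ F] {H : E → F} {a : E}
    (hH : ContDiffAt ℝ 2 H a) (hsurj : (fderiv ℝ H a).range = ⊤) : ∃ ψ, IsStraightening H a ψ := by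
  set A := fderiv ℝ H a
  obtain ⟨R, hR⟩ := A.exists_rightInverse_of_surjective hsurj
  let Φ : E → E := fun x ↦ x - a + R (H x - H a - A (x - a))
  have hAΦ (x : E) : A (Φ x) = H x - H a := by
    have hAR (y : F) : A (R y) = y := congr($hR y)
    simp [Φ, hAR]
  have hΦa : Φ a = 0 := by simp [Φ]
  have hΦ : ContDiffAt ℝ 2 Φ a := by fun_prop
  have hDΦ : HasFDerivAt Φ (ContinuousLinearEquiv.refl ℝ E : E →L[ℝ] E) a := by
    have hid := (hasFDerivAt_id (𝕜 := ℝ) a).sub_const a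
    have hHa := (hH.differentiableAt two_ne_zero).hasFDerivAt.sub_const (H a)
    exact (hid.add (R.hasFDerivAt.comp a (hHa.sub (A.hasFDerivAt.comp a hid)))).congr_fderiv
      (by ext; simp [A])
  have hstrict := hΦ.hasStrictFDerivAt' hDΦ two_ne_zero
  refine ⟨hΦ.localInverse hDΦ two_ne_zero, ?_, ?_, ?_, ?_⟩
  · simpa only [hΦa] using hΦ.localInverse_apply_image hDΦ two_ne_zero
  · simpa only [hΦa] using hΦ.to_localInverse hDΦ two_ne_zero
  · have hinv := hstrict.to_localInverse.hasFDerivAt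
    rw [hΦa] at hinv
    exact hinv.fderiv
  · have hright := hstrict.eventually_right_inverse
    rw [hΦa] at hright
    filter_upwards [hright] with y hy
    rw [← sub_eq_iff_eq_add', ← hAΦ]
    exact congr(A $hy)

namespace IsStraightening

variable {H : E → F} {a : E} {ψ : E → E}

theorem hasFDerivAt_zero (hψ : IsStraightening H a ψ) : HasFDerivAt ψ (.id ℝ E) 0 :=
  hψ.fderiv_zero ▸ (hψ.contDiffAt.differentiableAt two_ne_zero).hasFDerivAt

theorem hasFDerivAt_fderiv_zero (hψ : IsStraightening H a ψ) :
    HasFDerivAt (fderiv ℝ ψ) (fderiv ℝ (fderiv ℝ ψ) 0) 0 :=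
  ((hψ.contDiffAt.fderiv_right (m := 1) one_add_one_eq_two.le).differentiableAt
    one_ne_zero).hasFDerivAt

theorem tendsto_nhds (hψ : IsStraightening H a ψ) : Tendsto ψ (𝓝 0) (𝓝 a) :=
  hψ.map_zero ▸ hψ.contDiffAt.continuousAt.tendsto

theorem eventually_fderiv_comp_fderiv_eq (hψ : IsStraightening H a ψ) (hH : ContDiffAt ℝ 2 H a) :
    ∀ᶠ y in 𝓝 0, fderiv ℝ H (ψ y) ∘L fderiv ℝ ψ y = fderiv ℝ H a := by
  have hdiff := hψ.tendsto_nhds.eventually (hH.eventually (by simp))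
  filter_upwards [hψ.eventually_comp_eq.eventually_nhds, hdiff, hψ.contDiffAt.eventually (by simp)]
    with y haff hHy hψy
  have hchain := (hHy.differentiableAt two_ne_zero).hasFDerivAt.comp y
    (hψy.differentiableAt two_ne_zero).hasFDerivAt
  exact hchain.unique (((fderiv ℝ H a).hasFDerivAt.const_add (H a)).congr_of_eventuallyEq haff)

theorem fderiv_apply_fderiv_fderiv_add_eq_zero (hψ : IsStraightening H a ψ)
    (hH : ContDiffAt ℝ 2 H a) (x y : E) :
    fderiv ℝ H a (fderiv ℝ (fderiv ℝ ψ) 0 x y) + fderiv ℝ (fderiv ℝ H) a x y = 0 := by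
  have hDH : HasFDerivAt (fderiv ℝ H) (fderiv ℝ (fderiv ℝ H) a) (ψ 0) :=
    hψ.map_zero ▸ ((hH.fderiv_right (m := 1) one_add_one_eq_two.le).differentiableAt
      one_ne_zero).hasFDerivAt
  have hcomp := (hDH.comp 0 hψ.hasFDerivAt_zero).clm_comp hψ.hasFDerivAt_fderiv_zero
  have hconst := (hasFDerivAt_const (𝕜 := ℝ) (fderiv ℝ H a) (0 : E)).congr_of_eventuallyEq
    (hψ.eventually_fderiv_comp_fderiv_eq hH)
  simpa [hψ.map_zero, hψ.fderiv_zero] using congr($(hcomp.unique hconst) x y)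

theorem bilin_fderiv_fderiv_add_bilin_eq_zero (hψ : IsStraightening H a ψ) (hH : ContDiffAt ℝ 2 H a)
    {ω : E →L[ℝ] E →L[ℝ] G}
    (hω : ∀ᶠ x in 𝓝 a, H x = H a → ∀ u v, fderiv ℝ H x u = 0 → fderiv ℝ H x v = 0 → ω u v = 0)
    {x v w : E} (hx : fderiv ℝ H a x = 0) (hv : fderiv ℝ H a v = 0) (hw : fderiv ℝ H a w = 0) :
    ω (fderiv ℝ (fderiv ℝ ψ) 0 x v) w + ω v (fderiv ℝ (fderiv ℝ ψ) 0 x w) = 0 := by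
  have hline : HasDerivAt (fun s : ℝ ↦ s • x) x 0 := by
    simpa using (hasDerivAt_id (0 : ℝ)).smul_const x
  have htend : Tendsto (fun s : ℝ ↦ s • x) (𝓝 0) (𝓝 0) := by
    simpa using hline.continuousAt.tendsto
  have hfield (z : E) : HasDerivAt (fun s : ℝ ↦ fderiv ℝ ψ (s • x) z)
      (fderiv ℝ (fderiv ℝ ψ) 0 x z) 0 := by
    have hcomp := hψ.hasFDerivAt_fderiv_zero.comp_hasDerivAt_of_eq 0 hline (zero_smul ℝ x).symm
    simpa using hcomp.clm_apply (hasDerivAt_const (0 : ℝ) z)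
  have hprod : HasDerivAt (fun s : ℝ ↦ ω (fderiv ℝ ψ (s • x) v) (fderiv ℝ ψ (s • x) w))
      (ω (fderiv ℝ (fderiv ℝ ψ) 0 x v) (fderiv ℝ ψ ((0 : ℝ) • x) w) +
        ω (fderiv ℝ ψ ((0 : ℝ) • x) v) (fderiv ℝ (fderiv ℝ ψ) 0 x w)) 0 :=
    (ω.hasFDerivAt.comp_hasDerivAt 0 (hfield v)).clm_apply (hfield w)
  have hvanish : ∀ᶠ s : ℝ in 𝓝 0, ω (fderiv ℝ ψ (s • x) v) (fderiv ℝ ψ (s • x) w) = 0 := by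
    filter_upwards [htend.eventually (hψ.tendsto_nhds.eventually hω),
      htend.eventually hψ.eventually_comp_eq,
      htend.eventually (hψ.eventually_fderiv_comp_fderiv_eq hH)] with s hωs hlevel htangent
    refine hωs (by simp [hlevel, hx]) _ _ ?_ ?_
    · simpa [hv] using congr($htangent v)
    · simpa [hw] using congr($htangent w)
  have hzero := (hasDerivAt_const (0 : ℝ) (0 : G)).congr_of_eventuallyEq hvanish
  simpa [hψ.fderiv_zero] using hprod.unique hzero

end IsStraightening

theorem exists_secondFundamentalForm [CompleteSpace E] [FiniteDimensional ℝ F] {H : E → F} {a : E}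
    {ω : E →L[ℝ] E →L[ℝ] G} (hH : ContDiffAt ℝ 2 H a) (hsurj : (fderiv ℝ H a).range = ⊤)
    (hω : ∀ᶠ x in 𝓝 a, H x = H a → ∀ u v, fderiv ℝ H x u = 0 → fderiv ℝ H x v = 0 → ω u v = 0) :
    ∃ B : E →L[ℝ] E →L[ℝ] E,
      (∀ x y, fderiv ℝ H a (B x y) + fderiv ℝ (fderiv ℝ H) a x y = 0) ∧
      ∀ x v w, fderiv ℝ H a x = 0 → fderiv ℝ H a v = 0 → fderiv ℝ H a w = 0 →
        ω (B x v) w + ω v (B x w) = 0 := by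
  obtain ⟨ψ, hψ⟩ := exists_isStraightening hH hsurj
  exact ⟨fderiv ℝ (fderiv ℝ ψ) 0, hψ.fderiv_apply_fderiv_fderiv_add_eq_zero hH,
    fun _ _ _ ↦ hψ.bilin_fderiv_fderiv_add_bilin_eq_zero hH hω⟩

end Straightening

section VanishingOrder

theorem natCast_lt_vanishOrder_iff_iteratedDeriv {h : ℝ → ℝ} {k : ℕ} :
    (k : ℕ∞) < vanishOrder h ↔ ∀ m, 1 ≤ m → m ≤ k → iteratedDeriv m h 0 = 0 := by
  rw [← ENat.add_one_le_iff (ENat.natCast_ne_top k), vanishOrder, le_sInf_iff]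
  refine ⟨fun hle m hm hmk ↦ ?_, ?_⟩
  · by_contra hne
    exact absurd (hle _ ⟨m, rfl, hm, hne⟩) (by norm_cast; omega)
  · rintro hzero _ ⟨m, rfl, hm, hne⟩
    by_contra hlt
    exact hne (hzero m hm (by norm_cast at hlt; omega))

theorem natCast_lt_vanishOrder_iff {h : ℝ → ℝ} {k : ℕ} (hh : ContDiff ℝ k h) (h0 : h 0 = 0) :
    (k : ℕ∞) < vanishOrder h ↔ h =o[𝓝 0] fun t ↦ t ^ k := by
  have htaylor := taylor_isLittleO_univ (x₀ := 0) hh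
  simp only [taylor_within_apply, sub_zero, iteratedDerivWithin_univ, mul_smul,
    smul_comm (_ : ℝ)⁻¹] at htaylor
  rw [natCast_lt_vanishOrder_iff_iteratedDeriv, isLittleO_pow_iff_of_sub_sum_isLittleO htaylor]
  refine ⟨fun hzero m _ hmk ↦ ?_, fun hzero m _ hmk ↦ ?_⟩
  · rcases m.eq_zero_or_pos with rfl | hm
    · simp [h0]
    · simp [hzero m hm hmk]
  · simpa [Nat.factorial_ne_zero] using hzero m (Finset.mem_range_succ_iff.2 hmk) hmk

theorem vanishOrder_zero : vanishOrder (fun _ ↦ 0) = ⊤ := by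
  simp [vanishOrder]

end VanishingOrder

section CuspCurve

variable {E F : Type*} [NormedAddCommGroup E] [NormedSpace ℝ E] [NormedAddCommGroup F]
  [NormedSpace ℝ F]

/-- The curve `t ↦ t²v + t³w + t⁵u`, the common shape of both branches of `(T₇)¹`. -/
def cuspCurve (v w u : E) (t : ℝ) : E :=
  t ^ 2 • v + t ^ 3 • w + t ^ 5 • u

/-- The Taylor coefficients of orders `0, …, 5` at `t = 0` of `t ↦ H (cuspCurve v w u t)`;
coefficients of higher order are set to `0`. -/
def cuspJet (H : E → F) (v w u : E) : ℕ → F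
  | 0 => H 0
  | 2 => fderiv ℝ H 0 v
  | 3 => fderiv ℝ H 0 w
  | 4 => (1 / 2 : ℝ) • fderiv ℝ (fderiv ℝ H) 0 v v
  | 5 => fderiv ℝ H 0 u + fderiv ℝ (fderiv ℝ H) 0 v w
  | _ => 0

variable {v w u : E}

theorem contDiff_cuspCurve {k : WithTop ℕ∞} : ContDiff ℝ k (cuspCurve v w u) := by
  unfold cuspCurve
  fun_prop

theorem cuspCurve_zero : cuspCurve v w u 0 = 0 := by
  simp [cuspCurve]

theorem tendsto_cuspCurve : Tendsto (cuspCurve v w u) (𝓝 0) (𝓝 0) := by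
  simpa only [cuspCurve_zero] using
    (contDiff_cuspCurve (k := 0) (v := v) (w := w) (u := u)).continuous.tendsto 0

theorem cuspCurve_isBigO : cuspCurve v w u =O[𝓝 0] fun t ↦ t ^ 2 := by
  have hv : (fun t : ℝ ↦ t ^ 2 • v) =O[𝓝 0] fun t ↦ t ^ 2 := by
    simpa using (isBigO_refl (fun t : ℝ ↦ t ^ 2) (𝓝 0)).smul
      (isBigO_const_const v (one_ne_zero' ℝ) (𝓝 0))
  exact (hv.add (isLittleO_pow_smul_of_lt (by norm_num) w).isBigO).add
    (isLittleO_pow_smul_of_lt (by norm_num) u).isBigO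

theorem secondTaylor_cuspCurve_sub_cuspJet {H : E → F}
    (hsymm : IsSymmSndFDerivAt ℝ H 0) (t : ℝ) :
    (∑ k ∈ Finset.range 3, (k ! : ℝ)⁻¹ • iteratedFDeriv ℝ k H 0 fun _ ↦ cuspCurve v w u t) -
      ∑ m ∈ Finset.range 6, t ^ m • cuspJet H v w u m =
    t ^ 6 • (1 / 2 : ℝ) • fderiv ℝ (fderiv ℝ H) 0 w w + t ^ 7 • fderiv ℝ (fderiv ℝ H) 0 v u +
      t ^ 8 • fderiv ℝ (fderiv ℝ H) 0 w u +
      t ^ 10 • (1 / 2 : ℝ) • fderiv ℝ (fderiv ℝ H) 0 u u := by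
  simp only [Finset.sum_range_succ, Finset.sum_range_zero, cuspJet, cuspCurve,
    iteratedFDeriv_zero_apply, iteratedFDeriv_one_apply, iteratedFDeriv_two_apply, map_add,
    map_smul, add_apply, smul_apply, hsymm.eq w v,
    hsymm.eq u v, hsymm.eq u w, Nat.factorial]
  push_cast
  module

theorem comp_cuspCurve_sub_cuspJet_isLittleO [CompleteSpace F] {H : E → F}
    (hH : ContDiffAt ℝ 3 H 0) :
    (fun t ↦ H (cuspCurve v w u t) - ∑ m ∈ Finset.range 6, t ^ m • cuspJet H v w u m)
      =o[𝓝 0] fun t ↦ t ^ 5 := by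
  have hrem := (isBigO_sub_taylor_of_contDiffAt (n := 2) hH).comp_tendsto
    (tendsto_cuspCurve (v := v) (w := w) (u := u))
  have hsix : (fun t ↦ ‖cuspCurve v w u t‖ ^ 3) =o[𝓝 0] fun t ↦ t ^ 5 := by
    have hpow := (cuspCurve_isBigO (v := v) (w := w) (u := u)).norm_left.pow 3
    simp only [← pow_mul] at hpow
    exact hpow.trans_isLittleO (isLittleO_pow_pow (by norm_num))
  have hsymm : IsSymmSndFDerivAt ℝ H 0 := hH.isSymmSndFDerivAt (by norm_num)
  have htail : (fun t ↦
      (∑ k ∈ Finset.range 3, (k ! : ℝ)⁻¹ • iteratedFDeriv ℝ k H 0 fun _ ↦ cuspCurve v w u t) -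
        ∑ m ∈ Finset.range 6, t ^ m • cuspJet H v w u m) =o[𝓝 0] fun t ↦ t ^ 5 := by
    simp only [secondTaylor_cuspCurve_sub_cuspJet hsymm]
    refine ((IsLittleO.add ?_ ?_).add ?_).add ?_ <;> exact isLittleO_pow_smul_of_lt (by norm_num) _
  refine ((hrem.trans_isLittleO hsix).add htail).congr_left fun t ↦ ?_
  simp only [Function.comp_apply, zero_add]
  exact sub_add_sub_cancel _ _ _

theorem comp_cuspCurve_isLittleO_iff [CompleteSpace F] {H : E → F} (hH : ContDiffAt ℝ 3 H 0)
    {k : ℕ} (hk : k ≤ 5) :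
    (fun t ↦ H (cuspCurve v w u t)) =o[𝓝 0] (fun t ↦ t ^ k) ↔
      ∀ m ≤ k, cuspJet H v w u m = 0 := by
  have hpow : (fun t : ℝ ↦ t ^ 5) =O[𝓝 0] fun t ↦ t ^ k := by
    rcases hk.eq_or_lt with rfl | hk
    exacts [isBigO_refl _ _, (isLittleO_pow_pow hk).isBigO]
  rw [isLittleO_pow_iff_of_sub_sum_isLittleO
    ((comp_cuspCurve_sub_cuspJet_isLittleO hH).trans_isBigO hpow)]
  exact ⟨fun h m hm ↦ h m (Finset.mem_range_succ_iff.2 (hm.trans hk)) hm, fun h m _ hm ↦ h m hm⟩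

end CuspCurve

section SymplecticForm

/-- The standard symplectic form as a continuous bilinear map. -/
def stdSympCLM (n : ℕ) : (Fin (2 * n) → ℝ) →L[ℝ] (Fin (2 * n) → ℝ) →L[ℝ] ℝ :=
  LinearMap.toContinuousBilinearMap <| LinearMap.mk₂ ℝ (stdSymp n)
    (fun u u' v ↦ by
      simp only [stdSymp, Pi.add_apply, ← Finset.sum_add_distrib]
      exact Finset.sum_congr rfl fun i _ ↦ by ring)
    (fun c u v ↦ by
      simp only [stdSymp, Pi.smul_apply, smul_eq_mul, Finset.mul_sum]
      exact Finset.sum_congr rfl fun i _ ↦ by ring)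
    (fun u v v' ↦ by
      simp only [stdSymp, Pi.add_apply, ← Finset.sum_add_distrib]
      exact Finset.sum_congr rfl fun i _ ↦ by ring)
    (fun c u v ↦ by
      simp only [stdSymp, Pi.smul_apply, smul_eq_mul, Finset.mul_sum]
      exact Finset.sum_congr rfl fun i _ ↦ by ring)

theorem stdSympCLM_apply {n : ℕ} (u v : Fin (2 * n) → ℝ) : stdSympCLM n u v = stdSymp n u v := by
  simp [stdSympCLM]

end SymplecticForm

namespace LagrangianGerm

variable {n : ℕ} {L : LagrangianGerm n}

/-- The defining equations of a Lagrangian germ, bundled into one map to `ℝⁿ`. -/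
def equations (L : LagrangianGerm n) (x : Fin (2 * n) → ℝ) : Fin n → ℝ :=
  fun i ↦ L.H i x

theorem contDiff_equations (L : LagrangianGerm n) (k : ℕ) : ContDiff ℝ k L.equations :=
  contDiff_pi.2 fun i ↦ contDiff_infty.1 (L.smooth i) k

theorem equations_zero (L : LagrangianGerm n) : L.equations 0 = 0 :=
  funext L.zero_at_zero

theorem fderiv_equations_apply (x u : Fin (2 * n) → ℝ) (i : Fin n) :
    fderiv ℝ L.equations x u i = fderiv ℝ (L.H i) x u :=
  congr($((hasFDerivAt_pi.2 fun i ↦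
    ((L.smooth i).differentiable (by simp) x).hasFDerivAt).fderiv) u i)

theorem fderiv_equations_eq_zero_iff {x u : Fin (2 * n) → ℝ} :
    fderiv ℝ L.equations x u = 0 ↔ ∀ i, fderiv ℝ (L.H i) x u = 0 := by
  simp [funext_iff, fderiv_equations_apply]

theorem range_fderiv_equations_zero (L : LagrangianGerm n) :
    (fderiv ℝ L.equations 0).range = ⊤ := by
  obtain ⟨U, -, hU, hL⟩ := L.lagrangian
  have hli := (hL 0 hU L.zero_at_zero).1.map' (ContinuousLinearMap.coeLM ℝ)
    (LinearMap.ker_eq_bot.2 ContinuousLinearMap.coe_injective)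
  rw [LinearMap.range_eq_top]
  intro y
  obtain ⟨u, hu⟩ := linearIndependent_iff_surjective_pi.1 hli y
  refine ⟨u, funext fun i ↦ ?_⟩
  simpa [fderiv_equations_apply] using congr($hu i)

theorem eventually_stdSympCLM_eq_zero (L : LagrangianGerm n) :
    ∀ᶠ x in 𝓝 0, L.equations x = L.equations 0 → ∀ u v, fderiv ℝ L.equations x u = 0 →
      fderiv ℝ L.equations x v = 0 → stdSympCLM n u v = 0 := by
  obtain ⟨U, hUo, hU, hL⟩ := L.lagrangian
  filter_upwards [hUo.mem_nhds hU] with x hx heq u v hu hv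
  rw [stdSympCLM_apply]
  rw [equations_zero] at heq
  exact (hL x hx fun i ↦ congr($heq i)).2 u v (fderiv_equations_eq_zero_iff.1 hu)
    (fderiv_equations_eq_zero_iff.1 hv)

theorem stdSympCLM_eq_zero {u v : Fin (2 * n) → ℝ} (hu : fderiv ℝ L.equations 0 u = 0)
    (hv : fderiv ℝ L.equations 0 v = 0) : stdSympCLM n u v = 0 :=
  L.eventually_stdSympCLM_eq_zero.self_of_nhds rfl u v hu hv

end LagrangianGerm

section TangencyOrder

variable {n : ℕ} {L : LagrangianGerm n}

theorem natCast_lt_tOrd_iff {f : ℝ → Fin (2 * n) → ℝ} {k : ℕ} (hf : ContDiff ℝ k f)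
    (hf0 : f 0 = 0) :
    (k : ℕ∞) < tOrd f L ↔ (fun t ↦ L.equations (f t)) =o[𝓝 0] fun t ↦ t ^ k := by
  have hcoord (i : Fin n) : (k : ℕ∞) + 1 ≤ vanishOrder (fun t ↦ L.H i (f t)) ↔
      (fun t ↦ L.equations (f t) i) =o[𝓝 0] fun t ↦ t ^ k := by
    rw [ENat.add_one_le_iff (ENat.natCast_ne_top k)]
    exact natCast_lt_vanishOrder_iff ((contDiff_infty.1 (L.smooth i) k).comp hf)
      (by rw [hf0, L.zero_at_zero])
  rw [← ENat.add_one_le_iff (ENat.natCast_ne_top k), tOrd, le_iInf_iff, isLittleO_pi]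
  exact forall_congr' hcoord

theorem tOrd_eq_top_of_equations_comp_eq_zero {f : ℝ → Fin (2 * n) → ℝ}
    (hf : ∀ t, L.equations (f t) = 0) : tOrd f L = ⊤ := by
  have hcoord (i : Fin n) : (fun t ↦ L.H i (f t)) = fun _ ↦ 0 := funext fun t ↦ congr($(hf t) i)
  simp [tOrd, hcoord, vanishOrder_zero]

theorem Lt2_le_Lt1_left (f g : ℝ → Fin (2 * n) → ℝ) : Lt2 f g ≤ Lt1 f :=
  iSup_mono fun _ ↦ min_le_left _ _

variable {v w u v' w' u' : Fin (2 * n) → ℝ}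

theorem natCast_lt_tOrd_cuspCurve_iff {k : ℕ} (hk : k ≤ 5) :
    (k : ℕ∞) < tOrd (cuspCurve v w u) L ↔ ∀ m ≤ k, cuspJet L.equations v w u m = 0 := by
  rw [natCast_lt_tOrd_iff contDiff_cuspCurve cuspCurve_zero,
    comp_cuspCurve_isLittleO_iff (L.contDiff_equations 3).contDiffAt hk]

theorem fderiv_eq_zero_of_two_lt_tOrd_cuspCurve (h : 2 < tOrd (cuspCurve v w u) L) :
    fderiv ℝ L.equations 0 v = 0 :=
  (natCast_lt_tOrd_cuspCurve_iff (by norm_num)).1 h 2 le_rfl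

theorem fderiv_eq_zero_of_three_lt_tOrd_cuspCurve (h : 3 < tOrd (cuspCurve v w u) L) :
    fderiv ℝ L.equations 0 w = 0 :=
  (natCast_lt_tOrd_cuspCurve_iff (by norm_num)).1 h 3 le_rfl

theorem Lt2_cuspCurve_le_two (h : stdSymp n v' v ≠ 0) :
    Lt2 (cuspCurve v w u) (cuspCurve v' w' u') ≤ 2 := by
  refine iSup_le fun L ↦ not_lt.1 fun hL ↦ h ?_
  rw [← stdSympCLM_apply]
  exact L.stdSympCLM_eq_zero (fderiv_eq_zero_of_two_lt_tOrd_cuspCurve (lt_min_iff.1 hL).2)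
    (fderiv_eq_zero_of_two_lt_tOrd_cuspCurve (lt_min_iff.1 hL).1)

theorem Lt1_cuspCurve_le_three (h : stdSymp n w v ≠ 0) : Lt1 (cuspCurve v w u) ≤ 3 := by
  refine iSup_le fun L ↦ not_lt.1 fun hL ↦ h ?_
  rw [← stdSympCLM_apply]
  exact L.stdSympCLM_eq_zero (fderiv_eq_zero_of_three_lt_tOrd_cuspCurve hL)
    (fderiv_eq_zero_of_two_lt_tOrd_cuspCurve (lt_trans (by norm_num) hL))

theorem Lt1_cuspCurve_le_five (h : stdSymp n v u ≠ 0) : Lt1 (cuspCurve v w u) ≤ 5 := by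
  refine iSup_le fun L ↦ not_lt.1 fun hL ↦ h ?_
  have hjet := (natCast_lt_tOrd_cuspCurve_iff (k := 5) le_rfl).1 hL
  have hv : fderiv ℝ L.equations 0 v = 0 := hjet 2 (by norm_num)
  have hw : fderiv ℝ L.equations 0 w = 0 := hjet 3 (by norm_num)
  have hvv : fderiv ℝ (fderiv ℝ L.equations) 0 v v = 0 := by
    simpa [cuspJet] using hjet 4 (by norm_num)
  have hvw : fderiv ℝ L.equations 0 u + fderiv ℝ (fderiv ℝ L.equations) 0 v w = 0 :=
    hjet 5 le_rfl
  obtain ⟨B, hB, hBω⟩ := exists_secondFundamentalForm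
    (L.contDiff_equations 2).contDiffAt L.range_fderiv_equations_zero
    L.eventually_stdSympCLM_eq_zero
  have hBvv : fderiv ℝ L.equations 0 (B v v) = 0 := by simpa [hvv] using hB v v
  have hBvw : fderiv ℝ L.equations 0 (u - B v w) = 0 := by
    rw [map_sub, sub_eq_zero]
    exact add_right_cancel (hvw.trans (hB v w).symm)
  have hωB : stdSympCLM n v (B v w) = 0 := by
    simpa [L.stdSympCLM_eq_zero hBvv hw] using hBω v v w hv hv hw
  calc stdSymp n v u = stdSympCLM n v (u - B v w) + stdSympCLM n v (B v w) := by
        rw [← map_add, sub_add_cancel, stdSympCLM_apply]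
    _ = 0 := by rw [L.stdSympCLM_eq_zero hv hBvw, hωB, add_zero]

theorem two_le_tOrd_cuspCurve : 2 ≤ tOrd (cuspCurve v w u) L := by
  refine Order.add_one_le_of_lt ((natCast_lt_tOrd_cuspCurve_iff (k := 1) (by norm_num)).2 ?_)
  intro m hm
  interval_cases m
  exacts [L.equations_zero, rfl]

theorem three_le_tOrd_cuspCurve (hv : fderiv ℝ L.equations 0 v = 0) :
    3 ≤ tOrd (cuspCurve v w u) L := by
  refine Order.add_one_le_of_lt ((natCast_lt_tOrd_cuspCurve_iff (k := 2) (by norm_num)).2 ?_)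
  intro m hm
  interval_cases m
  exacts [L.equations_zero, rfl, hv]

theorem five_le_tOrd_cuspCurve (hv : fderiv ℝ L.equations 0 v = 0)
    (hw : fderiv ℝ L.equations 0 w = 0) (hvv : fderiv ℝ (fderiv ℝ L.equations) 0 v v = 0) :
    5 ≤ tOrd (cuspCurve v w u) L := by
  refine Order.add_one_le_of_lt ((natCast_lt_tOrd_cuspCurve_iff (k := 4) (by norm_num)).2 ?_)
  intro m hm
  interval_cases m
  exacts [L.equations_zero, rfl, hv, hw, by simp [cuspJet, hvv]]

end TangencyOrder

section Coordinates

variable {n : ℕ}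

/-- The index of the coordinate `pᵢ` on `ℝ²ⁿ`. -/
def pIdx (i : Fin n) : Fin (2 * n) :=
  ⟨2 * i, by omega⟩

/-- The index of the coordinate `qᵢ` on `ℝ²ⁿ`. -/
def qIdx (i : Fin n) : Fin (2 * n) :=
  ⟨2 * i + 1, by omega⟩

theorem pIdx_inj {i j : Fin n} : pIdx i = pIdx j ↔ i = j := by
  simp [pIdx, Fin.ext_iff]

theorem qIdx_inj {i j : Fin n} : qIdx i = qIdx j ↔ i = j := by
  simp [qIdx, Fin.ext_iff]

theorem pIdx_ne_qIdx (i j : Fin n) : pIdx i ≠ qIdx j := by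
  simp only [pIdx, qIdx, ne_eq, Fin.mk.injEq]
  omega

theorem stdSymp_eq_sum (u v : Fin (2 * n) → ℝ) :
    stdSymp n u v = ∑ i, (u (pIdx i) * v (qIdx i) - u (qIdx i) * v (pIdx i)) :=
  rfl

theorem stdSymp_single_pIdx (i : Fin n) (a : ℝ) (v : Fin (2 * n) → ℝ) :
    stdSymp n (Pi.single (pIdx i) a) v = a * v (qIdx i) := by
  simp [stdSymp_eq_sum, Pi.single_apply, pIdx_inj, (pIdx_ne_qIdx _ _).symm]

/-- The index of `pᵢ` if `i ∈ s`, and of `qᵢ` otherwise. -/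
def mixedIdx (s : Finset (Fin n)) (i : Fin n) : Fin (2 * n) :=
  if i ∈ s then pIdx i else qIdx i

theorem mixedIdx_injective (s : Finset (Fin n)) : Function.Injective (mixedIdx s) := by
  intro i j hij
  unfold mixedIdx at hij
  split_ifs at hij
  exacts [pIdx_inj.1 hij, (pIdx_ne_qIdx _ _ hij).elim, (pIdx_ne_qIdx _ _ hij.symm).elim,
    qIdx_inj.1 hij]

theorem stdSymp_eq_zero_of_mixedIdx_eq_zero {s : Finset (Fin n)} {u v : Fin (2 * n) → ℝ}
    (hu : ∀ i, u (mixedIdx s i) = 0) (hv : ∀ i, v (mixedIdx s i) = 0) : stdSymp n u v = 0 := by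
  rw [stdSymp_eq_sum]
  refine Finset.sum_eq_zero fun i _ ↦ ?_
  by_cases hi : i ∈ s
  · have hup : u (pIdx i) = 0 := by simpa [mixedIdx, hi] using hu i
    have hvp : v (pIdx i) = 0 := by simpa [mixedIdx, hi] using hv i
    simp [hup, hvp]
  · have huq : u (qIdx i) = 0 := by simpa [mixedIdx, hi] using hu i
    have hvq : v (qIdx i) = 0 := by simpa [mixedIdx, hi] using hv i
    simp [huq, hvq]

/-- The linear map `ℝ²ⁿ → ℝⁿ` whose `i`-th component is `pᵢ` if `i ∈ s` and `qᵢ` otherwise. -/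
def mixedProj (s : Finset (Fin n)) : (Fin (2 * n) → ℝ) →L[ℝ] Fin n → ℝ :=
  .pi fun i ↦ .proj (mixedIdx s i)

theorem mixedProj_single_pIdx {s : Finset (Fin n)} {i : Fin n} (hi : i ∉ s) (a : ℝ) :
    mixedProj s (Pi.single (pIdx i) a) = 0 := by
  ext k
  have hne : mixedIdx s k ≠ pIdx i := by
    unfold mixedIdx
    split_ifs with hk
    exacts [fun h ↦ hi (pIdx_inj.1 h ▸ hk), (pIdx_ne_qIdx i k).symm]
  simp [mixedProj, hne]

theorem mixedProj_single_qIdx {s : Finset (Fin n)} {i : Fin n} (hi : i ∈ s) (a : ℝ) :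
    mixedProj s (Pi.single (qIdx i) a) = 0 := by
  ext k
  have hne : mixedIdx s k ≠ qIdx i := by
    unfold mixedIdx
    split_ifs with hk
    exacts [pIdx_ne_qIdx k i, fun h ↦ hk (qIdx_inj.1 h ▸ hi)]
  simp [mixedProj, hne]

theorem linearIndependent_proj_mixedIdx (s : Finset (Fin n)) :
    LinearIndependent ℝ fun i ↦
      (ContinuousLinearMap.proj (mixedIdx s i) : (Fin (2 * n) → ℝ) →L[ℝ] ℝ) := by
  refine LinearIndependent.of_comp (ContinuousLinearMap.coeLM ℝ) ?_
  rw [linearIndependent_iff_surjective_pi]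
  exact (mixedIdx_injective s).surjective_comp_right

/-- The coordinate Lagrangian subspace cut out by `pᵢ = 0` for `i ∈ s` and `qᵢ = 0` for
`i ∉ s`. -/
def coordinateLagrangian (s : Finset (Fin n)) : LagrangianGerm n where
  H i x := x (mixedIdx s i)
  smooth i := contDiff_apply ℝ ℝ (mixedIdx s i)
  zero_at_zero _ := rfl
  lagrangian := by
    have hproj (i : Fin n) (x : Fin (2 * n) → ℝ) :
        fderiv ℝ (fun x : Fin (2 * n) → ℝ ↦ x (mixedIdx s i)) x = .proj (mixedIdx s i) :=
      (ContinuousLinearMap.proj (mixedIdx s i) : (Fin (2 * n) → ℝ) →L[ℝ] ℝ).fderiv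
    refine ⟨Set.univ, isOpen_univ, Set.mem_univ 0, fun x _ _ ↦ ?_⟩
    simp only [hproj]
    exact ⟨linearIndependent_proj_mixedIdx s,
      fun u v hu hv ↦ stdSymp_eq_zero_of_mixedIdx_eq_zero hu hv⟩

theorem equations_coordinateLagrangian (s : Finset (Fin n)) :
    (coordinateLagrangian s).equations = mixedProj s :=
  rfl

theorem fderiv_equations_coordinateLagrangian (s : Finset (Fin n)) :
    fderiv ℝ (coordinateLagrangian s).equations = fun _ ↦ mixedProj s :=
  funext fun _ ↦ (mixedProj s).fderiv

end Coordinates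

section Branches

variable {n : ℕ} {i j : Fin n}

/-- The first branch of `(T₇)¹`: `pᵢ = t³`, `qᵢ = -t²`, `qⱼ = -c t²`. -/
def branch₁ (i j : Fin n) (c : ℝ) : ℝ → Fin (2 * n) → ℝ :=
  cuspCurve (-Pi.single (qIdx i) 1 - Pi.single (qIdx j) c) (Pi.single (pIdx i) 1) 0

/-- The second branch of `(T₇)¹`: `pᵢ = t³`, `pⱼ = -t²`, `qⱼ = c t⁵`. -/
def branch₂ (i j : Fin n) (c : ℝ) : ℝ → Fin (2 * n) → ℝ :=
  cuspCurve (Pi.single (pIdx j) (-1)) (Pi.single (pIdx i) 1) (Pi.single (qIdx j) c)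

theorem branch₁_zero_one (hn : 2 ≤ n) (c : ℝ) :
    branch₁ ⟨0, by omega⟩ ⟨1, by omega⟩ c = fun (t : ℝ) (k : Fin (2 * n)) ↦
      if (k : ℕ) = 0 then t ^ 3 else if (k : ℕ) = 1 then -t ^ 2
      else if (k : ℕ) = 3 then -c * t ^ 2 else 0 := by
  ext t k
  simp only [branch₁, cuspCurve, pIdx, qIdx, Pi.add_apply, Pi.sub_apply, Pi.neg_apply,
    Pi.smul_apply, Pi.zero_apply, Pi.single_apply, smul_eq_mul, Fin.ext_iff]
  grind

theorem branch₂_zero_one (hn : 2 ≤ n) (c : ℝ) :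
    branch₂ ⟨0, by omega⟩ ⟨1, by omega⟩ c = fun (t : ℝ) (k : Fin (2 * n)) ↦
      if (k : ℕ) = 0 then t ^ 3 else if (k : ℕ) = 2 then -t ^ 2
      else if (k : ℕ) = 3 then c * t ^ 5 else 0 := by
  ext t k
  simp only [branch₂, cuspCurve, pIdx, qIdx, Pi.add_apply, Pi.smul_apply, Pi.single_apply,
    smul_eq_mul, Fin.ext_iff]
  grind

theorem Lt1_branch₁_le (hij : i ≠ j) (c : ℝ) : Lt1 (branch₁ i j c) ≤ 3 :=
  Lt1_cuspCurve_le_three (by simp [stdSymp_single_pIdx, qIdx_inj, hij])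

theorem Lt1_branch₁ (hij : i ≠ j) (c : ℝ) : Lt1 (branch₁ i j c) = 3 := by
  refine (Lt1_branch₁_le hij c).antisymm (le_iSup_of_le (coordinateLagrangian .univ) ?_)
  refine three_le_tOrd_cuspCurve ?_
  simp [fderiv_equations_coordinateLagrangian, mixedProj_single_qIdx]

theorem Lt1_branch₂ {c : ℝ} (hc : c ≠ 0) : Lt1 (branch₂ i j c) = 5 := by
  refine (Lt1_cuspCurve_le_five ?_).antisymm (le_iSup_of_le (coordinateLagrangian ∅) ?_)
  · simpa [stdSymp_single_pIdx] using hc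
  · apply five_le_tOrd_cuspCurve <;>
      simp [fderiv_equations_coordinateLagrangian, mixedProj_single_pIdx]

theorem Lt1_branch₂_zero : Lt1 (branch₂ i j 0) = ⊤ := by
  refine top_le_iff.1 (le_iSup_of_le (coordinateLagrangian ∅) (top_le_iff.2 ?_))
  refine tOrd_eq_top_of_equations_comp_eq_zero fun t ↦ ?_
  simp [equations_coordinateLagrangian, branch₂, cuspCurve, mixedProj_single_pIdx]

theorem Lt2_branch₁_branch₂ (hij : i ≠ j) {c₁ : ℝ} (hc₁ : c₁ ≠ 0) (c₂ : ℝ) :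
    Lt2 (branch₁ i j c₁) (branch₂ i j c₂) = 2 := by
  refine (Lt2_cuspCurve_le_two ?_).antisymm
    (le_iSup_of_le (coordinateLagrangian ∅) (le_min two_le_tOrd_cuspCurve two_le_tOrd_cuspCurve))
  simpa [stdSymp_single_pIdx, qIdx_inj, hij.symm] using hc₁

theorem Lt2_branch₁_zero_branch₂ (hij : i ≠ j) (c : ℝ) :
    Lt2 (branch₁ i j 0) (branch₂ i j c) = 3 := by
  refine ((Lt2_le_Lt1_left _ _).trans (Lt1_branch₁_le hij 0)).antisymm
    (le_iSup_of_le (coordinateLagrangian {i}) (le_min ?_ ?_))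
  · refine three_le_tOrd_cuspCurve ?_
    simp [fderiv_equations_coordinateLagrangian, mixedProj_single_qIdx]
  · refine three_le_tOrd_cuspCurve ?_
    simp [fderiv_equations_coordinateLagrangian, mixedProj_single_pIdx, hij.symm]

end Branches

/-- Lagrangian tangency orders for the class `(T₇)¹`. -/
theorem T7_1_lagrangian_tangency_orders
    (n : ℕ) (hn : 2 ≤ n) (c₁ c₂ : ℝ)
    (B₁ B₂ : ℝ → Fin (2 * n) → ℝ)
    (hB₁ : B₁ = fun (t : ℝ) (j : Fin (2 * n)) => if (j : ℕ) = 0 then t ^ 3 else if (j : ℕ) = 1 then -t ^ 2 else if (j : ℕ) = 3 then -c₁ * t ^ 2 else (0 : ℝ))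
    (hB₂ : B₂ = fun (t : ℝ) (j : Fin (2 * n)) => if (j : ℕ) = 0 then t ^ 3 else if (j : ℕ) = 2 then -t ^ 2 else if (j : ℕ) = 3 then c₂ * t ^ 5 else (0 : ℝ)) :
    Lt1 B₁ = 3 ∧
    (c₂ ≠ 0 → Lt1 B₂ = 5) ∧ (c₂ = 0 → Lt1 B₂ = ⊤) ∧
    (c₁ ≠ 0 → Lt2 B₁ B₂ = 2) ∧ (c₁ = 0 → Lt2 B₁ B₂ = 3) := by
  have hij : (⟨0, by omega⟩ : Fin n) ≠ ⟨1, by omega⟩ := by simp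
  rw [hB₁, hB₂, ← branch₁_zero_one hn, ← branch₂_zero_one hn]
  refine ⟨Lt1_branch₁ hij c₁, Lt1_branch₂, ?_, (Lt2_branch₁_branch₂ hij · c₂), ?_⟩
  · rintro rfl
    exact Lt1_branch₂_zero
  · rintro rfl
    exact Lt2_branch₁_zero_branch₂ hij c₂

end
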